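/- arXiv:1009.0171 — 7 statements merged into one kernel-verified Lean document; each statement's English description precedes it below -/
import Mathlib

section
/- Let B be the alternating bilinear map determined by B(e₁,e₂) = c₃e₃, B(e₂,e₃) = c₁e₁, B(e₃,e₁) = c₂e₂ for real constants c₁, c₂, c₃, set μᵢ := (c₁+c₂+c₃)/2 − cᵢ, let ∇ be the bilinear map satisfying the Koszul formula for B, and let R be the associated curvature tensor. Then the sectional curvatures satisfy ⟨R(e₁,e₂)e₂, e₁⟩ = c₃μ₃ − μ₁μ₂, ⟨R(e₂,e₃)e₃, e₂⟩ = c₁μ₁ − μ₂μ₃, and ⟨R(e₁,e₃)e₃, e₁⟩ = c₂μ₂ − μ₁μ₃. -/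
/-!
The Koszul formula, tested against the three basis vectors, gives the whole connection in a Milnor
frame: `∇ eᵢ eᵢ = 0`, and `∇ eᵢ eⱼ = μᵢ eₖ`, `∇ eᵢ eₖ = -μᵢ eⱼ` for `(i, j, k)` a cyclic
permutation. The reason is that `⟪B (eₐ) (e_b), e_d⟫` vanishes unless `a, b, d` are distinct, and
for `(i, j, k)` cyclic the Koszul formula reads `2⟪∇ eᵢ eⱼ, eₖ⟫ = cₖ - cᵢ + cⱼ = 2μᵢ`.
Substituting into the definition of `R` leaves a scalar multiple of a basis vector in each of the
three cases.
-/

open RealInnerProductSpace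

/-- Sectional curvatures of a left-invariant metric on a 3-dimensional unimodular
Lie group in a Milnor frame: `K₁₂ = c₃μ₃ − μ₁μ₂`, `K₂₃ = c₁μ₁ − μ₂μ₃`,
`K₁₃ = c₂μ₂ − μ₁μ₃`. -/
theorem sectional_curvatures_unimodular_milnor_frame
    (c₁ c₂ c₃ μ₁ μ₂ μ₃ : ℝ)
    (hμ₁ : μ₁ = (c₁ + c₂ + c₃) / 2 - c₁)
    (hμ₂ : μ₂ = (c₁ + c₂ + c₃) / 2 - c₂)
    (hμ₃ : μ₃ = (c₁ + c₂ + c₃) / 2 - c₃)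
    (e : Fin 3 → EuclideanSpace ℝ (Fin 3))
    (he : ∀ i, e i = EuclideanSpace.single i 1)
    (B nabla : EuclideanSpace ℝ (Fin 3) →ₗ[ℝ] EuclideanSpace ℝ (Fin 3) →ₗ[ℝ]
      EuclideanSpace ℝ (Fin 3))
    (halt : ∀ X, B X X = 0)
    (h12 : B (e 0) (e 1) = c₃ • e 2)
    (h23 : B (e 1) (e 2) = c₁ • e 0)
    (h31 : B (e 2) (e 0) = c₂ • e 1)
    (hKoszul : ∀ X Y Z : EuclideanSpace ℝ (Fin 3),
      2 * ⟪nabla X Y, Z⟫ = ⟪B X Y, Z⟫ - ⟪B Y Z, X⟫ + ⟪B Z X, Y⟫)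
    (R : EuclideanSpace ℝ (Fin 3) → EuclideanSpace ℝ (Fin 3) →
      EuclideanSpace ℝ (Fin 3) → EuclideanSpace ℝ (Fin 3))
    (hR : ∀ X Y Z, R X Y Z =
      nabla X (nabla Y Z) - nabla Y (nabla X Z) - nabla (B X Y) Z) :
    ⟪R (e 0) (e 1) (e 1), e 0⟫ = c₃ * μ₃ - μ₁ * μ₂ ∧
    ⟪R (e 1) (e 2) (e 2), e 1⟫ = c₁ * μ₁ - μ₂ * μ₃ ∧
    ⟪R (e 0) (e 2) (e 2), e 0⟫ = c₂ * μ₂ - μ₁ * μ₃ := by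
  have hin : ∀ i j, ⟪e i, e j⟫ = if i = j then (1 : ℝ) else 0 := by
    intro i j
    simp [he, EuclideanSpace.inner_single_left]
  have hext : ∀ v w : EuclideanSpace ℝ (Fin 3), (∀ k, 2 * ⟪v, e k⟫ = 2 * ⟪w, e k⟫) → v = w := by
    intro v w h
    ext k
    simpa [he, EuclideanSpace.inner_single_right] using h k
  have hanti : ∀ X Y, B Y X = -B X Y := by
    intro X Y
    have h := halt (X + Y)
    simp only [map_add, LinearMap.add_apply, halt, zero_add, add_zero] at h
    exact eq_neg_of_add_eq_zero_left (by rw [← h, add_comm])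
  have h21 : B (e 1) (e 0) = -(c₃ • e 2) := by rw [hanti, h12]
  have h32 : B (e 2) (e 1) = -(c₁ • e 0) := by rw [hanti, h23]
  have h13 : B (e 0) (e 2) = -(c₂ • e 1) := by rw [hanti, h31]
  have hnorm : ∀ i, ‖e i‖ = 1 := by simp [he]
  have n_self : ∀ i, nabla (e i) (e i) = 0 := by
    intro i
    apply hext
    intro k
    rw [hKoszul, hanti (e i) (e k)]
    fin_cases i <;> fin_cases k <;>
      simp [halt, h12, h23, h31, h21, h32, h13, inner_neg_left, real_inner_smul_left, hin]
  have hnabla : ∀ i j v, (∀ k, ⟪B (e i) (e j), e k⟫ - ⟪B (e j) (e k), e i⟫ + ⟪B (e k) (e i), e j⟫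
      = 2 * ⟪v, e k⟫) → nabla (e i) (e j) = v :=
    fun i j v h => hext _ _ fun k => (hKoszul _ _ _).trans (h k)
  obtain ⟨n12, n13, n23, n32, n31⟩ :
      nabla (e 0) (e 1) = μ₁ • e 2 ∧ nabla (e 0) (e 2) = -(μ₁ • e 1) ∧
      nabla (e 1) (e 2) = μ₂ • e 0 ∧ nabla (e 2) (e 1) = -(μ₃ • e 0) ∧
      nabla (e 2) (e 0) = μ₃ • e 1 := by
    refine ⟨?_, ?_, ?_, ?_, ?_⟩ <;> refine hnabla _ _ _ fun k => ?_ <;> fin_cases k <;>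
      simp [halt, h12, h23, h31, h21, h32, h13, inner_neg_left, real_inner_smul_left, hin, hnorm,
        hμ₁, hμ₂, hμ₃] <;>
      ring
  refine ⟨?_, ?_, ?_⟩ <;>
    simp only [hR, n_self, h12, h23, h13, n12, n13, n23, n32, n31, map_zero, map_neg, map_smul,
      LinearMap.neg_apply, LinearMap.smul_apply, inner_sub_left, inner_neg_left, inner_zero_left,
      real_inner_smul_left, hin] <;>
    simp <;> ring
end

section
/- Let B be the alternating bilinear map determined by B(e₁,e₂) = c₃e₃, B(e₂,e₃) = c₁e₁, B(e₃,e₁) = c₂e₂ for real constants c₁, c₂, c₃, let ∇ be the bilinear map satisfying the Koszul formula for B, and let R be the associated curvature tensor. Then the frame e₁, e₂, e₃ diagonalizes the Ricci tensor: Ric(eᵢ, eⱼ) = 0 for all i ≠ j, where Ric(X,Y) = Σ_{k=1}^{3} ⟨R(e_k, X)Y, e_k⟩. -/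
/-!
The Koszul formula forces `∇_{eᵢ} eᵢ = 0`, and `∇_{eᵢ} eⱼ = ± μᵢ eₖ` whenever `i, j, k` are
distinct, where `μ₁ = (c₂ + c₃ - c₁) / 2` and cyclically. Thus, up to a scalar, both `B` and `∇`
send a pair of distinct frame vectors to the third one and a repeated pair to zero. Hence
`R(eₖ, eᵢ) eⱼ` with `i ≠ j` vanishes when `k = i` or when `i, j, k` are distinct, and for `k = j` it
is a multiple of `eᵢ`, orthogonal to `eₖ`. Every term of the trace defining `Ric(eᵢ, eⱼ)` is
therefore zero.
-/

open RealInnerProductSpace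

/-- The Milnor frame of a 3-dimensional unimodular Lie group with left-invariant
metric diagonalizes the Ricci tensor. -/
theorem milnor_frame_diagonalizes_ricci_unimodular
    (c₁ c₂ c₃ : ℝ)
    (e : Fin 3 → EuclideanSpace ℝ (Fin 3))
    (he : ∀ i, e i = EuclideanSpace.single i 1)
    (B nabla : EuclideanSpace ℝ (Fin 3) →ₗ[ℝ] EuclideanSpace ℝ (Fin 3) →ₗ[ℝ]
      EuclideanSpace ℝ (Fin 3))
    (halt : ∀ X, B X X = 0)
    (h12 : B (e 0) (e 1) = c₃ • e 2)
    (h23 : B (e 1) (e 2) = c₁ • e 0)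
    (h31 : B (e 2) (e 0) = c₂ • e 1)
    (hKoszul : ∀ X Y Z : EuclideanSpace ℝ (Fin 3),
      2 * ⟪nabla X Y, Z⟫ = ⟪B X Y, Z⟫ - ⟪B Y Z, X⟫ + ⟪B Z X, Y⟫)
    (R : EuclideanSpace ℝ (Fin 3) → EuclideanSpace ℝ (Fin 3) →
      EuclideanSpace ℝ (Fin 3) → EuclideanSpace ℝ (Fin 3))
    (hR : ∀ X Y Z, R X Y Z =
      nabla X (nabla Y Z) - nabla Y (nabla X Z) - nabla (B X Y) Z)
    (Ric : EuclideanSpace ℝ (Fin 3) → EuclideanSpace ℝ (Fin 3) → ℝ)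
    (hRic : ∀ X Y, Ric X Y = ∑ k : Fin 3, ⟪R (e k) X Y, e k⟫) :
    ∀ i j : Fin 3, i ≠ j → Ric (e i) (e j) = 0 := by
  have ho : ∀ i j, ⟪e i, e j⟫ = if i = j then (1 : ℝ) else 0 := by
    intro i j
    rw [he, he]
    simp [EuclideanSpace.inner_single_left]
  have hnorm : ∀ i, ‖e i‖ = 1 := by simp [he]
  -- The factor 2 matches the left-hand side of the Koszul formula.
  have hext : ∀ v w : EuclideanSpace ℝ (Fin 3), (∀ k, 2 * ⟪v, e k⟫ = 2 * ⟪w, e k⟫) → v = w := by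
    intro v w h
    ext k
    have hk := h k
    rw [he] at hk
    simpa [EuclideanSpace.inner_single_right] using hk
  have hskew : ∀ X Y, B X Y = -B Y X := by
    intro X Y
    have h := halt (X + Y)
    simp only [map_add, LinearMap.add_apply, halt, zero_add, add_zero] at h
    exact eq_neg_of_add_eq_zero_right h
  have h21 : B (e 1) (e 0) = -(c₃ • e 2) := by rw [hskew, h12]
  have h32 : B (e 2) (e 1) = -(c₁ • e 0) := by rw [hskew, h23]
  have h13 : B (e 0) (e 2) = -(c₂ • e 1) := by rw [hskew, h31]
  have hdiag : ∀ i, nabla (e i) (e i) = 0 := by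
    intro i
    apply hext
    intro k
    rw [hKoszul]
    fin_cases i <;> fin_cases k <;>
      simp [halt, h12, h23, h31, h21, h32, h13, inner_smul_left, ho, hnorm]
  -- Each coefficient is the Koszul formula evaluated on the three distinct frame vectors.
  have n12 : nabla (e 0) (e 1) = ((c₂ + c₃ - c₁) / 2) • e 2 := by
    apply hext
    intro k
    rw [hKoszul]
    fin_cases k <;>
      simp [halt, h12, h23, h31, h21, h32, h13, inner_smul_left, ho, hnorm] <;> ring
  have n13 : nabla (e 0) (e 2) = (-((c₂ + c₃ - c₁) / 2)) • e 1 := by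
    apply hext
    intro k
    rw [hKoszul]
    fin_cases k <;>
      simp [halt, h12, h23, h31, h21, h32, h13, inner_smul_left, ho, hnorm] <;> ring
  have n23 : nabla (e 1) (e 2) = ((c₃ + c₁ - c₂) / 2) • e 0 := by
    apply hext
    intro k
    rw [hKoszul]
    fin_cases k <;>
      simp [halt, h12, h23, h31, h21, h32, h13, inner_smul_left, ho, hnorm] <;> ring
  have n21 : nabla (e 1) (e 0) = (-((c₃ + c₁ - c₂) / 2)) • e 2 := by
    apply hext
    intro k
    rw [hKoszul]
    fin_cases k <;>
      simp [halt, h12, h23, h31, h21, h32, h13, inner_smul_left, ho, hnorm] <;> ring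
  have n31 : nabla (e 2) (e 0) = ((c₁ + c₂ - c₃) / 2) • e 1 := by
    apply hext
    intro k
    rw [hKoszul]
    fin_cases k <;>
      simp [halt, h12, h23, h31, h21, h32, h13, inner_smul_left, ho, hnorm] <;> ring
  have n32 : nabla (e 2) (e 1) = (-((c₁ + c₂ - c₃) / 2)) • e 0 := by
    apply hext
    intro k
    rw [hKoszul]
    fin_cases k <;>
      simp [halt, h12, h23, h31, h21, h32, h13, inner_smul_left, ho, hnorm] <;> ring
  intro i j hij
  rw [hRic, Fin.sum_univ_three]
  fin_cases i <;> fin_cases j <;> first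
    | exact absurd rfl hij
    | simp [hR, halt, h12, h23, h31, h21, h32, h13, hdiag, n12, n13, n21, n23, n31, n32,
        inner_sub_left, inner_smul_left, ho, hnorm]
end

section
/- Let ξ, η be real numbers with ξ, η ≥ 0, let B be the alternating bilinear map determined by B(e₁,e₂) = (1+ξ)e₂ + (1+ξ)η·e₃, B(e₂,e₃) = 0, B(e₁,e₃) = −(1−ξ)η·e₂ + (1−ξ)e₃, and let ∇ be the bilinear map satisfying the Koszul formula for B. Then ∇_{e₁}e₁ = 0, ∇_{e₁}e₂ = η·e₃, ∇_{e₁}e₃ = −η·e₂, ∇_{e₂}e₁ = −(1+ξ)e₂ − ξη·e₃, ∇_{e₂}e₂ = (1+ξ)e₁, ∇_{e₂}e₃ = ξη·e₁, ∇_{e₃}e₁ = −ξη·e₂ − (1−ξ)e₃, ∇_{e₃}e₂ = ξη·e₁, ∇_{e₃}e₃ = (1−ξ)e₁. -/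
open RealInnerProductSpace

/-!
Testing the Koszul formula against `Z = e k` gives the `k`-th coordinate of `nabla (e i) (e j)` in
terms of coordinates of brackets of basis vectors. The brackets not listed in the hypotheses follow
from `B` being alternating, so each claimed identity is checked coordinatewise.
-/

/-- The Levi-Civita connection of a 3-dimensional non-unimodular Lie group with
left-invariant metric, in the normalized Milnor basis with structure constants
`(ξ, η)`. -/
theorem levi_civita_nonunimodular_milnor_frame
    (ξ η : ℝ) (hξ : 0 ≤ ξ) (hη : 0 ≤ η)
    (e : Fin 3 → EuclideanSpace ℝ (Fin 3))
    (he : ∀ i, e i = EuclideanSpace.single i 1)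
    (B nabla : EuclideanSpace ℝ (Fin 3) →ₗ[ℝ] EuclideanSpace ℝ (Fin 3) →ₗ[ℝ]
      EuclideanSpace ℝ (Fin 3))
    (halt : ∀ X, B X X = 0)
    (h12 : B (e 0) (e 1) = (1 + ξ) • e 1 + ((1 + ξ) * η) • e 2)
    (h23 : B (e 1) (e 2) = 0)
    (h13 : B (e 0) (e 2) = (-((1 - ξ) * η)) • e 1 + (1 - ξ) • e 2)
    (hKoszul : ∀ X Y Z : EuclideanSpace ℝ (Fin 3),
      2 * ⟪nabla X Y, Z⟫ = ⟪B X Y, Z⟫ - ⟪B Y Z, X⟫ + ⟪B Z X, Y⟫) :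
    nabla (e 0) (e 0) = 0 ∧
    nabla (e 0) (e 1) = η • e 2 ∧
    nabla (e 0) (e 2) = -η • e 1 ∧
    nabla (e 1) (e 0) = (-(1 + ξ)) • e 1 + (-(ξ * η)) • e 2 ∧
    nabla (e 1) (e 1) = (1 + ξ) • e 0 ∧
    nabla (e 1) (e 2) = (ξ * η) • e 0 ∧
    nabla (e 2) (e 0) = (-(ξ * η)) • e 1 + (-(1 - ξ)) • e 2 ∧
    nabla (e 2) (e 1) = (ξ * η) • e 0 ∧
    nabla (e 2) (e 2) = (1 - ξ) • e 0 := by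
  have hskew : ∀ X Y, B Y X = -B X Y := fun X Y => (LinearMap.IsAlt.neg halt X Y).symm
  have hinner : ∀ (u : EuclideanSpace ℝ (Fin 3)) (k : Fin 3), ⟪u, e k⟫ = u k := by
    intro u k
    simp [he, EuclideanSpace.inner_single_right]
  have hcoord : ∀ i j k : Fin 3, nabla (e i) (e j) k =
      (B (e i) (e j) k - B (e j) (e k) i + B (e k) (e i) j) / 2 := by
    intro i j k
    have h := hKoszul (e i) (e j) (e k)
    simp only [hinner] at h
    linarith
  have h21 := hskew (e 0) (e 1)
  have h32 := hskew (e 1) (e 2)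
  have h31 := hskew (e 0) (e 2)
  rw [h12] at h21
  rw [h23] at h32
  rw [h13] at h31
  have hentry : ∀ i k : Fin 3, e i k = if k = i then 1 else 0 := by
    intro i k
    simp [he]
  refine ⟨?_, ?_, ?_, ?_, ?_, ?_, ?_, ?_, ?_⟩ <;> ext k <;> fin_cases k <;>
    simp [hcoord, halt, h12, h23, h13, h21, h32, h31, hentry] <;> try ring
end

section
/- Let ξ, η be real numbers with ξ, η ≥ 0, let B be the alternating bilinear map determined by B(e₁,e₂) = (1+ξ)e₂ + (1+ξ)η·e₃, B(e₂,e₃) = 0, B(e₁,e₃) = −(1−ξ)η·e₂ + (1−ξ)e₃, let ∇ be the bilinear map satisfying the Koszul formula for B, and let R be the associated curvature tensor. Then ⟨R(e₁,e₂)e₂, e₁⟩ = −(ξη² + (1+ξ)² + ξη²(1+ξ)), ⟨R(e₂,e₃)e₃, e₂⟩ = ξ²(1+η²) − 1, and ⟨R(e₁,e₃)e₃, e₁⟩ = ξη² − (1−ξ)² + ξη²(1−ξ). -/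
open RealInnerProductSpace

/-!
Evaluating the Koszul formula on the orthonormal frame determines the connection completely.
With indices starting from `0`, it reads
`∇₀e₁ = η e₂`, `∇₀e₂ = -η e₁`, `∇₁e₀ = -(1+ξ) e₁ - ξη e₂`, `∇₂e₀ = -ξη e₁ - (1-ξ) e₂`,
`∇₁e₁ = (1+ξ) e₀`, `∇₁e₂ = ∇₂e₁ = ξη e₀`, `∇₂e₂ = (1-ξ) e₀`, `∇₀e₀ = 0`.
Substituting this table into the definition of the curvature tensor gives the three values.
-/

/-- Sectional curvatures of a 3-dimensional non-unimodular Lie group with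
left-invariant metric, in the normalized Milnor basis with structure constants
`(ξ, η)`: `K₁₂ = −(ξη² + (1+ξ)² + ξη²(1+ξ))`, `K₂₃ = ξ²(1+η²) − 1`,
`K₁₃ = ξη² − (1−ξ)² + ξη²(1−ξ)`. -/
theorem sectional_curvatures_nonunimodular_milnor_frame
    (ξ η : ℝ) (hξ : 0 ≤ ξ) (hη : 0 ≤ η)
    (e : Fin 3 → EuclideanSpace ℝ (Fin 3))
    (he : ∀ i, e i = EuclideanSpace.single i 1)
    (B nabla : EuclideanSpace ℝ (Fin 3) →ₗ[ℝ] EuclideanSpace ℝ (Fin 3) →ₗ[ℝ]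
      EuclideanSpace ℝ (Fin 3))
    (halt : ∀ X, B X X = 0)
    (h12 : B (e 0) (e 1) = (1 + ξ) • e 1 + ((1 + ξ) * η) • e 2)
    (h23 : B (e 1) (e 2) = 0)
    (h13 : B (e 0) (e 2) = (-((1 - ξ) * η)) • e 1 + (1 - ξ) • e 2)
    (hKoszul : ∀ X Y Z : EuclideanSpace ℝ (Fin 3),
      2 * ⟪nabla X Y, Z⟫ = ⟪B X Y, Z⟫ - ⟪B Y Z, X⟫ + ⟪B Z X, Y⟫)
    (R : EuclideanSpace ℝ (Fin 3) → EuclideanSpace ℝ (Fin 3) →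
      EuclideanSpace ℝ (Fin 3) → EuclideanSpace ℝ (Fin 3))
    (hR : ∀ X Y Z, R X Y Z =
      nabla X (nabla Y Z) - nabla Y (nabla X Z) - nabla (B X Y) Z) :
    ⟪R (e 0) (e 1) (e 1), e 0⟫ =
      -(ξ * η ^ 2 + (1 + ξ) ^ 2 + ξ * η ^ 2 * (1 + ξ)) ∧
    ⟪R (e 1) (e 2) (e 2), e 1⟫ = ξ ^ 2 * (1 + η ^ 2) - 1 ∧
    ⟪R (e 0) (e 2) (e 2), e 0⟫ =
      ξ * η ^ 2 - (1 - ξ) ^ 2 + ξ * η ^ 2 * (1 - ξ) := by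
  have hon : ∀ i j, ⟪e i, e j⟫ = if i = j then (1 : ℝ) else 0 := by
    intro i j
    simp [he, EuclideanSpace.inner_single_left]
  have hswap : ∀ X Y, B X Y = -B Y X := by
    intro X Y
    have h := halt (X + Y)
    simp only [map_add, LinearMap.add_apply, halt, zero_add, add_zero] at h
    exact eq_neg_of_add_eq_zero_right h
  have h21 := hswap (e 1) (e 0)
  have h31 := hswap (e 2) (e 0)
  have h32 := hswap (e 2) (e 1)
  rw [h12] at h21
  rw [h13] at h31
  rw [h23] at h32
  -- Testing against the frame suffices; the factor `2` matches the Koszul formula.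
  have hext : ∀ v w : EuclideanSpace ℝ (Fin 3), (∀ k, 2 * ⟪v, e k⟫ = 2 * ⟪w, e k⟫) → v = w := by
    intro v w h
    ext k
    simpa [he, EuclideanSpace.inner_single_right] using h k
  -- The whole connection table, checked coordinate by coordinate with the Koszul formula.
  obtain ⟨n01, n02, n10, n20, n11, n12, n21, n22, n00⟩ :
      nabla (e 0) (e 1) = η • e 2 ∧
      nabla (e 0) (e 2) = (-η) • e 1 ∧
      nabla (e 1) (e 0) = (-(1 + ξ)) • e 1 + (-(ξ * η)) • e 2 ∧
      nabla (e 2) (e 0) = (-(ξ * η)) • e 1 + (-(1 - ξ)) • e 2 ∧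
      nabla (e 1) (e 1) = (1 + ξ) • e 0 ∧
      nabla (e 1) (e 2) = (ξ * η) • e 0 ∧
      nabla (e 2) (e 1) = (ξ * η) • e 0 ∧
      nabla (e 2) (e 2) = (1 - ξ) • e 0 ∧
      nabla (e 0) (e 0) = 0 := by
    refine ⟨?_, ?_, ?_, ?_, ?_, ?_, ?_, ?_, ?_⟩ <;> refine hext _ _ fun k => ?_ <;> rw [hKoszul] <;>
      fin_cases k <;>
      simp [halt, h12, h13, h23, h21, h31, h32, hon, inner_add_left, inner_neg_left,
        real_inner_smul_left, -inner_self_eq_norm_sq_to_K] <;>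
      ring
  refine ⟨?_, ?_, ?_⟩ <;>
    simp [hR, h12, h13, h23, n00, n01, n02, n10, n11, n12, n20, n21, n22, hon, inner_add_left,
      inner_sub_left, inner_neg_left, real_inner_smul_left,
      -inner_self_eq_norm_sq_to_K] <;>
    ring
end

section
/- Let ξ, η be real numbers with ξ, η ≥ 0, let B be the alternating bilinear map determined by B(e₁,e₂) = (1+ξ)e₂ + (1+ξ)η·e₃, B(e₂,e₃) = 0, B(e₁,e₃) = −(1−ξ)η·e₂ + (1−ξ)e₃, let ∇ be the bilinear map satisfying the Koszul formula for B, and let R be the associated curvature tensor. Then the frame e₁, e₂, e₃ diagonalizes the Ricci tensor: Ric(eᵢ, eⱼ) = 0 for all i ≠ j, where Ric(X,Y) = Σ_{k=1}^{3} ⟨R(e_k, X)Y, e_k⟩. -/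
/-!
Write `a = 1 + ξ`, `b = (1 + ξ) η`, `c = -(1 - ξ) η`, `d = 1 - ξ`, so that `ad e₁` acts on the abelian
ideal spanned by `e₂, e₃` with columns `(a, b)` and `(c, d)`. Pairing the Koszul formula with the
orthonormal frame gives all nine vectors `∇_{eᵢ} eⱼ` in terms of `a`, `d` and `(b ± c) / 2`.
Expanding the curvature then reduces each off-diagonal Ricci component to a polynomial identity.
The components involving `e₁` vanish term by term, and `Ric(e₂, e₃) = -(a c + b d)` vanishes because
the columns of `ad e₁` are orthogonal. This is Milnor's normalization of the frame.

In the code the frame is indexed from zero: `e 0, e 1, e 2`.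
-/

open RealInnerProductSpace

set_option linter.unusedSimpArgs false

/-- The normalized Milnor basis of a 3-dimensional non-unimodular Lie group with
left-invariant metric diagonalizes the Ricci tensor. -/
theorem milnor_frame_diagonalizes_ricci_nonunimodular
    (ξ η : ℝ) (hξ : 0 ≤ ξ) (hη : 0 ≤ η)
    (e : Fin 3 → EuclideanSpace ℝ (Fin 3))
    (he : ∀ i, e i = EuclideanSpace.single i 1)
    (B nabla : EuclideanSpace ℝ (Fin 3) →ₗ[ℝ] EuclideanSpace ℝ (Fin 3) →ₗ[ℝ]
      EuclideanSpace ℝ (Fin 3))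
    (halt : ∀ X, B X X = 0)
    (h12 : B (e 0) (e 1) = (1 + ξ) • e 1 + ((1 + ξ) * η) • e 2)
    (h23 : B (e 1) (e 2) = 0)
    (h13 : B (e 0) (e 2) = (-((1 - ξ) * η)) • e 1 + (1 - ξ) • e 2)
    (hKoszul : ∀ X Y Z : EuclideanSpace ℝ (Fin 3),
      2 * ⟪nabla X Y, Z⟫ = ⟪B X Y, Z⟫ - ⟪B Y Z, X⟫ + ⟪B Z X, Y⟫)
    (R : EuclideanSpace ℝ (Fin 3) → EuclideanSpace ℝ (Fin 3) →
      EuclideanSpace ℝ (Fin 3) → EuclideanSpace ℝ (Fin 3))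
    (hR : ∀ X Y Z, R X Y Z =
      nabla X (nabla Y Z) - nabla Y (nabla X Z) - nabla (B X Y) Z)
    (Ric : EuclideanSpace ℝ (Fin 3) → EuclideanSpace ℝ (Fin 3) → ℝ)
    (hRic : ∀ X Y, Ric X Y = ∑ k : Fin 3, ⟪R (e k) X Y, e k⟫) :
    ∀ i j : Fin 3, i ≠ j → Ric (e i) (e j) = 0 := by
  have hon : Orthonormal ℝ e := by
    rw [show e = EuclideanSpace.basisFun (Fin 3) ℝ from funext fun i => by simp [he]]
    exact (EuclideanSpace.basisFun (Fin 3) ℝ).orthonormal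
  have hself : ∀ i, ⟪e i, e i⟫ = 1 := fun i => by
    rw [real_inner_self_eq_norm_sq, hon.1 i, one_pow]
  have hoff : ∀ i j, i ≠ j → ⟪e i, e j⟫ = 0 := fun i j h => hon.2 h
  have i01 := hoff 0 1 (by decide)
  have i02 := hoff 0 2 (by decide)
  have i10 := hoff 1 0 (by decide)
  have i12 := hoff 1 2 (by decide)
  have i20 := hoff 2 0 (by decide)
  have i21 := hoff 2 1 (by decide)
  -- A vector is determined by its inner products with the frame.
  have hext : ∀ v w : EuclideanSpace ℝ (Fin 3),
      2 * ⟪v, e 0⟫ = 2 * ⟪w, e 0⟫ → 2 * ⟪v, e 1⟫ = 2 * ⟪w, e 1⟫ →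
      2 * ⟪v, e 2⟫ = 2 * ⟪w, e 2⟫ → v = w := by
    intro v w h0 h1 h2
    simp only [he, EuclideanSpace.inner_single_right] at h0 h1 h2
    ext k
    fin_cases k <;> simp_all
  have hskew : ∀ X Y, B X Y = -B Y X := by
    intro X Y
    have h := halt (X + Y)
    simp only [map_add, LinearMap.add_apply, halt, zero_add, add_zero] at h
    exact eq_neg_of_add_eq_zero_right h
  have h21 : B (e 1) (e 0) = -((1 + ξ) • e 1 + ((1 + ξ) * η) • e 2) := by rw [hskew, h12]
  have h32 : B (e 2) (e 1) = 0 := by rw [hskew, h23, neg_zero]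
  have h31 : B (e 2) (e 0) = -((-((1 - ξ) * η)) • e 1 + (1 - ξ) • e 2) := by rw [hskew, h13]
  -- Here `η * ξ = (b + c) / 2` and `η = (b - c) / 2`.
  have n00 : nabla (e 0) (e 0) = 0 := by
    apply hext <;> rw [hKoszul] <;>
      simp only [halt, h12, h21, h13, h31, h23, h32, inner_add_left, inner_neg_left, real_inner_smul_left, inner_zero_left,
        hself, i01, i02, i10, i12, i20, i21] <;> ring
  have n01 : nabla (e 0) (e 1) = η • e 2 := by
    apply hext <;> rw [hKoszul] <;>
      simp only [halt, h12, h21, h13, h31, h23, h32, inner_add_left, inner_neg_left, real_inner_smul_left, inner_zero_left,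
        hself, i01, i02, i10, i12, i20, i21] <;> ring
  have n02 : nabla (e 0) (e 2) = -(η • e 1) := by
    apply hext <;> rw [hKoszul] <;>
      simp only [halt, h12, h21, h13, h31, h23, h32, inner_add_left, inner_neg_left, real_inner_smul_left, inner_zero_left,
        hself, i01, i02, i10, i12, i20, i21] <;> ring
  have n10 : nabla (e 1) (e 0) = -((1 + ξ) • e 1 + (η * ξ) • e 2) := by
    apply hext <;> rw [hKoszul] <;>
      simp only [halt, h12, h21, h13, h31, h23, h32, inner_add_left, inner_neg_left, real_inner_smul_left, inner_zero_left,
        hself, i01, i02, i10, i12, i20, i21] <;> ring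
  have n11 : nabla (e 1) (e 1) = (1 + ξ) • e 0 := by
    apply hext <;> rw [hKoszul] <;>
      simp only [halt, h12, h21, h13, h31, h23, h32, inner_add_left, inner_neg_left, real_inner_smul_left, inner_zero_left,
        hself, i01, i02, i10, i12, i20, i21] <;> ring
  have n12 : nabla (e 1) (e 2) = (η * ξ) • e 0 := by
    apply hext <;> rw [hKoszul] <;>
      simp only [halt, h12, h21, h13, h31, h23, h32, inner_add_left, inner_neg_left, real_inner_smul_left, inner_zero_left,
        hself, i01, i02, i10, i12, i20, i21] <;> ring
  have n20 : nabla (e 2) (e 0) = -((η * ξ) • e 1 + (1 - ξ) • e 2) := by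
    apply hext <;> rw [hKoszul] <;>
      simp only [halt, h12, h21, h13, h31, h23, h32, inner_add_left, inner_neg_left, real_inner_smul_left, inner_zero_left,
        hself, i01, i02, i10, i12, i20, i21] <;> ring
  have n21 : nabla (e 2) (e 1) = (η * ξ) • e 0 := by
    apply hext <;> rw [hKoszul] <;>
      simp only [halt, h12, h21, h13, h31, h23, h32, inner_add_left, inner_neg_left, real_inner_smul_left, inner_zero_left,
        hself, i01, i02, i10, i12, i20, i21] <;> ring
  have n22 : nabla (e 2) (e 2) = (1 - ξ) • e 0 := by
    apply hext <;> rw [hKoszul] <;>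
      simp only [halt, h12, h21, h13, h31, h23, h32, inner_add_left, inner_neg_left, real_inner_smul_left, inner_zero_left,
        hself, i01, i02, i10, i12, i20, i21] <;> ring
  intro i j hij
  rw [hRic, Fin.sum_univ_three, hR, hR, hR]
  fin_cases i <;> fin_cases j <;>
    first
    | exact absurd rfl hij
    | (simp only [Fin.zero_eta, Fin.mk_one, Fin.reduceFinMk, halt, h12, h21, h13, h31, h23, h32,
        n00, n01, n02, n10, n11, n12, n20, n21, n22, map_add, map_neg, map_smul, map_zero,
        LinearMap.add_apply, LinearMap.neg_apply, LinearMap.smul_apply, LinearMap.zero_apply,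
        inner_sub_left, inner_add_left, inner_neg_left, real_inner_smul_left, inner_zero_left,
        hself, i01, i02, i10, i12, i20, i21]
       ring)
end

section
/- Let η ≥ 0 be real, let B be the alternating bilinear map determined by B(e₁,e₂) = e₂ + η·e₃, B(e₂,e₃) = 0, B(e₁,e₃) = −η·e₂ + e₃ (the non-unimodular Milnor bracket with ξ = 0), let ∇ be the bilinear map satisfying the Koszul formula for B, and let R be the associated curvature tensor. Then for all X, Y, Z, W ∈ V one has ⟨R(X,Y)Z, W⟩ = ⟨X,Z⟩⟨Y,W⟩ − ⟨Y,Z⟩⟨X,W⟩; that is, the corresponding left-invariant metric has constant sectional curvature −1. -/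
open RealInnerProductSpace

/-!
Write `J` for the rotation `e₁ ↦ e₂ ↦ -e₁` of the plane `span (e₁, e₂)`, extended by `J e₀ = 0`
(indices as in `Fin 3`). The bracket is the one of the semidirect product `ℝ ⋉ ℝ²` in which `e₀`
acts on the plane as `1 + η J`. The skew part `η J` acts by isometries and does not affect the
curvature; the part `1` gives real hyperbolic space. Concretely, the Koszul formula yields
`∇_X Y = η x₀ J Y + ⟪X, Y⟫ e₀ - y₀ X`,
and substituting this into the definition of `R`, in coordinates, leaves a polynomial identity.
-/

/-- For the non-unimodular Milnor bracket with `ξ = 0`, the associated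
left-invariant metric has constant sectional curvature `−1`:
`⟨R(X,Y)Z, W⟩ = ⟨X,Z⟩⟨Y,W⟩ − ⟨Y,Z⟩⟨X,W⟩`. -/
theorem nonunimodular_xi_zero_constant_curvature
    (η : ℝ) (hη : 0 ≤ η)
    (e : Fin 3 → EuclideanSpace ℝ (Fin 3))
    (he : ∀ i, e i = EuclideanSpace.single i 1)
    (B nabla : EuclideanSpace ℝ (Fin 3) →ₗ[ℝ] EuclideanSpace ℝ (Fin 3) →ₗ[ℝ]
      EuclideanSpace ℝ (Fin 3))
    (halt : ∀ X, B X X = 0)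
    (h12 : B (e 0) (e 1) = e 1 + η • e 2)
    (h23 : B (e 1) (e 2) = 0)
    (h13 : B (e 0) (e 2) = (-η) • e 1 + e 2)
    (hKoszul : ∀ X Y Z : EuclideanSpace ℝ (Fin 3),
      2 * ⟪nabla X Y, Z⟫ = ⟪B X Y, Z⟫ - ⟪B Y Z, X⟫ + ⟪B Z X, Y⟫)
    (R : EuclideanSpace ℝ (Fin 3) → EuclideanSpace ℝ (Fin 3) →
      EuclideanSpace ℝ (Fin 3) → EuclideanSpace ℝ (Fin 3))
    (hR : ∀ X Y Z, R X Y Z =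
      nabla X (nabla Y Z) - nabla Y (nabla X Z) - nabla (B X Y) Z) :
    ∀ X Y Z W : EuclideanSpace ℝ (Fin 3),
      ⟪R X Y Z, W⟫ = ⟪X, Z⟫ * ⟪Y, W⟫ - ⟪Y, Z⟫ * ⟪X, W⟫ := by
  intro X Y Z W
  have hin : ∀ X Y : EuclideanSpace ℝ (Fin 3), ⟪X, Y⟫ = X 0 * Y 0 + X 1 * Y 1 + X 2 * Y 2 := by
    intro X Y
    simp [PiLp.inner_apply, Fin.sum_univ_three, mul_comm]
  have hskew : ∀ X Y, B Y X = -B X Y := by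
    intro X Y
    have h := halt (X + Y)
    simp only [map_add, LinearMap.add_apply, halt, zero_add, add_zero] at h
    exact eq_neg_of_add_eq_zero_left h
  have hexp : ∀ X : EuclideanSpace ℝ (Fin 3), X = X 0 • e 0 + X 1 • e 1 + X 2 • e 2 := by
    intro X
    ext i
    fin_cases i <;> simp [he]
  have hB : ∀ X Y, B X Y =
      (X 0 * (Y 1 - η * Y 2) - Y 0 * (X 1 - η * X 2)) • e 1 +
        (X 0 * (Y 2 + η * Y 1) - Y 0 * (X 2 + η * X 1)) • e 2 := by
    intro X Y
    conv_lhs => rw [hexp X, hexp Y]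
    simp only [map_add, map_smul, LinearMap.add_apply, LinearMap.smul_apply, halt,
      hskew (e 0) (e 1), hskew (e 0) (e 2), hskew (e 1) (e 2), h12, h13, h23]
    module
  have hB0 : ∀ X Y, B X Y 0 = 0 := by
    intro X Y
    simp [hB, he]
  have hB1 : ∀ X Y, B X Y 1 = X 0 * (Y 1 - η * Y 2) - Y 0 * (X 1 - η * X 2) := by
    intro X Y
    simp [hB, he]
  have hB2 : ∀ X Y, B X Y 2 = X 0 * (Y 2 + η * Y 1) - Y 0 * (X 2 + η * X 1) := by
    intro X Y
    simp [hB, he]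
  have hN0 : ∀ X Y, nabla X Y 0 = X 1 * Y 1 + X 2 * Y 2 := by
    intro X Y
    have h := hKoszul X Y (EuclideanSpace.single 0 1)
    simp [hin, hB0, hB1, hB2] at h
    linarith
  have hN1 : ∀ X Y, nabla X Y 1 = -(η * X 0 * Y 2) - Y 0 * X 1 := by
    intro X Y
    have h := hKoszul X Y (EuclideanSpace.single 1 1)
    simp [hin, hB0, hB1, hB2] at h
    linarith
  have hN2 : ∀ X Y, nabla X Y 2 = η * X 0 * Y 1 - Y 0 * X 2 := by
    intro X Y
    have h := hKoszul X Y (EuclideanSpace.single 2 1)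
    simp [hin, hB0, hB1, hB2] at h
    linarith
  simp only [hR, hin, PiLp.sub_apply, hN0, hN1, hN2, hB0, hB1, hB2]
  ring
end

section
/- Let λ > 0 be real, let B be the alternating bilinear map determined by B(e₁,e₂) = 0, B(e₂,e₃) = λ²·e₁, B(e₃,e₁) = −λ²·e₂ (the Milnor bracket of (E(1,1), g(λ,λ))), let ∇ be the bilinear map satisfying the Koszul formula for B, and let R be the associated curvature tensor. Then for all X, Y, Z, W ∈ V one has ⟨R(X,Y)Z, W⟩ = λ⁴·( ⟨X,W⟩⟨Y,Z⟩ − ⟨X,Z⟩⟨Y,W⟩ + 2⟨X,Z⟩⟨Y,e₃⟩⟨W,e₃⟩ + 2⟨Y,W⟩⟨X,e₃⟩⟨Z,e₃⟩ − 2⟨X,W⟩⟨Y,e₃⟩⟨Z,e₃⟩ − 2⟨Y,Z⟩⟨X,e₃⟩⟨W,e₃⟩ ). -/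
/-!
In the basis `e₁, e₂, e₃`, the bracket is `B(X, Y) = L (X × Y)` with `L = diag(a, -a, 0)` and
`a = λ²`. The Koszul formula then gives Milnor's description of the connection,
`∇_X Y = M X × Y` with `M = ½ (tr L) I - L = diag(-a, a, 0)`, obtained by testing against each
`eₖ`. With both maps known in coordinates, the curvature identity is a polynomial identity in the
coordinates of the four vectors.
-/

open RealInnerProductSpace

/-- The curvature tensor of `(E(1,1), g(λ,λ))` (for `λ = 1`, the model space
`Sol₃`): with Milnor bracket `B(e₁,e₂) = 0`, `B(e₂,e₃) = λ²e₁`,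
`B(e₃,e₁) = −λ²e₂`, one has
`⟨R(X,Y)Z,W⟩ = λ⁴(⟨X,W⟩⟨Y,Z⟩ − ⟨X,Z⟩⟨Y,W⟩ + 2⟨X,Z⟩⟨Y,e₃⟩⟨W,e₃⟩
 + 2⟨Y,W⟩⟨X,e₃⟩⟨Z,e₃⟩ − 2⟨X,W⟩⟨Y,e₃⟩⟨Z,e₃⟩ − 2⟨Y,Z⟩⟨X,e₃⟩⟨W,e₃⟩)`. -/
theorem curvature_tensor_sol_deformation
    (lam : ℝ) (hlam : 0 < lam)
    (e : Fin 3 → EuclideanSpace ℝ (Fin 3))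
    (he : ∀ i, e i = EuclideanSpace.single i 1)
    (B nabla : EuclideanSpace ℝ (Fin 3) →ₗ[ℝ] EuclideanSpace ℝ (Fin 3) →ₗ[ℝ]
      EuclideanSpace ℝ (Fin 3))
    (halt : ∀ X, B X X = 0)
    (h12 : B (e 0) (e 1) = 0)
    (h23 : B (e 1) (e 2) = (lam ^ 2) • e 0)
    (h31 : B (e 2) (e 0) = (-(lam ^ 2)) • e 1)
    (hKoszul : ∀ X Y Z : EuclideanSpace ℝ (Fin 3),
      2 * ⟪nabla X Y, Z⟫ = ⟪B X Y, Z⟫ - ⟪B Y Z, X⟫ + ⟪B Z X, Y⟫)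
    (R : EuclideanSpace ℝ (Fin 3) → EuclideanSpace ℝ (Fin 3) →
      EuclideanSpace ℝ (Fin 3) → EuclideanSpace ℝ (Fin 3))
    (hR : ∀ X Y Z, R X Y Z =
      nabla X (nabla Y Z) - nabla Y (nabla X Z) - nabla (B X Y) Z) :
    ∀ X Y Z W : EuclideanSpace ℝ (Fin 3),
      ⟪R X Y Z, W⟫ = lam ^ 4 *
        (⟪X, W⟫ * ⟪Y, Z⟫ - ⟪X, Z⟫ * ⟪Y, W⟫
          + 2 * ⟪X, Z⟫ * ⟪Y, e 2⟫ * ⟪W, e 2⟫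
          + 2 * ⟪Y, W⟫ * ⟪X, e 2⟫ * ⟪Z, e 2⟫
          - 2 * ⟪X, W⟫ * ⟪Y, e 2⟫ * ⟪Z, e 2⟫
          - 2 * ⟪Y, Z⟫ * ⟪X, e 2⟫ * ⟪W, e 2⟫) := by
  have expand (X : EuclideanSpace ℝ (Fin 3)) : X = X 0 • e 0 + X 1 • e 1 + X 2 • e 2 := by
    ext i
    fin_cases i <;> simp [he]
  have skew (X Y : EuclideanSpace ℝ (Fin 3)) : B X Y = -B Y X := by
    have h := halt (X + Y)
    simp only [map_add, LinearMap.add_apply, halt, zero_add, add_zero] at h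
    exact eq_neg_of_add_eq_zero_right h
  have h21 : B (e 1) (e 0) = 0 := by rw [skew, h12, neg_zero]
  have h32 : B (e 2) (e 1) = -((lam ^ 2) • e 0) := by rw [skew, h23]
  have h13 : B (e 0) (e 2) = -((-(lam ^ 2)) • e 1) := by rw [skew, h31]
  have hB (X Y : EuclideanSpace ℝ (Fin 3)) : B X Y =
      !₂[lam ^ 2 * (X 1 * Y 2 - X 2 * Y 1), -(lam ^ 2) * (X 2 * Y 0 - X 0 * Y 2), 0] := by
    conv_lhs => rw [expand X, expand Y]
    simp only [map_add, map_smul, LinearMap.add_apply, LinearMap.smul_apply, halt, h12, h21,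
      h23, h32, h31, h13]
    ext i
    fin_cases i <;> simp [he] <;> ring
  have hnabla (X Y : EuclideanSpace ℝ (Fin 3)) : nabla X Y =
      !₂[lam ^ 2 * (X 1 * Y 2), lam ^ 2 * (X 0 * Y 2),
        -(lam ^ 2) * (X 0 * Y 1 + X 1 * Y 0)] := by
    have h := hKoszul X Y
    have h0 := h (e 0)
    have h1 := h (e 1)
    have h2 := h (e 2)
    simp [hB, he, PiLp.inner_apply, Fin.sum_univ_three] at h0 h1 h2
    ext i
    fin_cases i <;> simp <;> linarith
  intro X Y Z W
  rw [hR]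
  simp only [hnabla, hB, he]
  simp [PiLp.inner_apply, Fin.sum_univ_three]
  ring
end
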